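/- arXiv:2407.07741 — 15 statements merged into one kernel-verified Lean document; each statement's English description precedes it below -/
import Mathlib

section
/- Let R be a poset function on a nonempty finite set V. Then the relation ⪰_R on V defined by u ⪰_R v if and only if R(u,v) ≠ ∅ is a partial order (reflexive, antisymmetric, transitive). Moreover, for all u,v ∈ V, R(u,v) = {x ∈ V : R(u,x) ≠ ∅ and R(x,v) ≠ ∅}, i.e., the directed transit function of the partial order ⪰_R equals R. -/
/-- For a poset function `R` on a nonempty finite set `V`, the relation
`u ⪰_R v ↔ R(u,v) ≠ ∅` is a partial order, and the directed transit function of `⪰_R`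
equals `R`. -/
theorem stmt_2 {V : Type*} [Fintype V] [Nonempty V]
    (R : V → V → Set V)
    -- (t0)
    (t0 : ∀ u v w, R u w ≠ ∅ → R w v ≠ ∅ → R u v ≠ ∅)
    -- (t1)
    (t1 : ∀ u v, R u v ≠ ∅ → u ∈ R u v ∧ v ∈ R u v)
    -- (t3)
    (t3 : ∀ u, R u u = {u})
    -- (t2a)
    (t2a : ∀ u v, R u v ≠ ∅ → u ≠ v → R v u = ∅)
    -- (tr1)
    (tr1 : ∀ u v w, u ≠ v → R u w ≠ ∅ → R w v ≠ ∅ → R u w ∪ R w v ⊆ R u v)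
    -- (tr2)
    (tr2 : ∀ u v w, u ≠ v → (R u w = ∅ ∨ R w v = ∅) → w ∉ R u v) :
    -- ⪰_R is reflexive
    (∀ u, R u u ≠ ∅) ∧
    -- ⪰_R is antisymmetric
    (∀ u v, R u v ≠ ∅ → R v u ≠ ∅ → u = v) ∧
    -- ⪰_R is transitive
    (∀ u v w, R u v ≠ ∅ → R v w ≠ ∅ → R u w ≠ ∅) ∧
    -- the directed transit function of ⪰_R equals R
    (∀ u v, R u v = {x : V | R u x ≠ ∅ ∧ R x v ≠ ∅}) := by
  have hr : ∀ u, R u u ≠ ∅ := fun u => by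
    rw [t3]; exact Set.singleton_ne_empty u
  have ha : ∀ u v, R u v ≠ ∅ → R v u ≠ ∅ → u = v := fun u v h1 h2 => by
    by_contra hne
    exact h2 (t2a u v h1 hne)
  refine ⟨hr, ha, fun u v w h1 h2 => t0 u w v h1 h2, fun u v => ?_⟩
  ext x
  rw [Set.mem_setOf_eq]
  by_cases huv : u = v
  · subst huv
    constructor
    · intro hx
      rw [t3, Set.mem_singleton_iff] at hx
      subst hx
      exact ⟨hr _, hr _⟩
    · rintro ⟨h1, h2⟩
      rw [t3, Set.mem_singleton_iff]
      exact (ha u x h1 h2).symm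
  · constructor
    · intro hx
      exact ⟨fun h => tr2 u v x huv (Or.inl h) hx, fun h => tr2 u v x huv (Or.inr h) hx⟩
    · rintro ⟨h1, h2⟩
      exact tr1 u v x huv h1 h2 (Or.inl (t1 u x h1).2)
end

section
/- Let R be a directed transit function on a nonempty finite set V. Then R satisfies (tr1) and (tr2) if and only if R satisfies (tr): for all u,v,w ∈ V with u ≠ v, one has w ∈ R(u,v) if and only if R(u,w) ≠ ∅ and R(w,v) ≠ ∅. -/
/-- A directed transit function `R` satisfies (tr1) and (tr2) if and only if
it satisfies (tr): for all `u ≠ v`, `w ∈ R(u,v) ↔ R(u,w) ≠ ∅ ∧ R(w,v) ≠ ∅`. -/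
theorem stmt_3 {V : Type*} [Fintype V] [Nonempty V]
    (R : V → V → Set V)
    -- (t0)
    (t0 : ∀ u v w, R u w ≠ ∅ → R w v ≠ ∅ → R u v ≠ ∅)
    -- (t1)
    (t1 : ∀ u v, R u v ≠ ∅ → u ∈ R u v ∧ v ∈ R u v)
    -- (t3)
    (t3 : ∀ u, R u u = {u}) :
    ((∀ u v w, u ≠ v → R u w ≠ ∅ → R w v ≠ ∅ → R u w ∪ R w v ⊆ R u v) ∧
     (∀ u v w, u ≠ v → (R u w = ∅ ∨ R w v = ∅) → w ∉ R u v))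
    ↔
    (∀ u v w, u ≠ v → (w ∈ R u v ↔ R u w ≠ ∅ ∧ R w v ≠ ∅)) := by
  constructor
  · rintro ⟨h1, h2⟩ u v w huv
    constructor
    · intro hw
      constructor
      · intro h
        exact h2 u v w huv (Or.inl h) hw
      · intro h
        exact h2 u v w huv (Or.inr h) hw
    · rintro ⟨ha, hb⟩
      exact h1 u v w huv ha hb (Or.inl (t1 u w ha).2)
  · intro h
    have key : ∀ a b x, R a b ≠ ∅ → x ∈ R a b → R a x ≠ ∅ ∧ R x b ≠ ∅ := by
      intro a b x hab hx
      by_cases e : a = b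
      · subst e
        rw [t3] at hx
        have hxa : x = a := hx
        subst hxa
        exact ⟨hab, hab⟩
      · exact (h a b x e).1 hx
    constructor
    · intro u v w huv ha hb x hx
      rw [h u v x huv]
      rcases hx with hx | hx
      · obtain ⟨p, q⟩ := key u w x ha hx
        exact ⟨p, t0 x v w q hb⟩
      · obtain ⟨p, q⟩ := key w v x hb hx
        exact ⟨t0 u x w ha p, q⟩
    · intro u v w huv hor hw
      obtain ⟨p, q⟩ := (h u v w huv).1 hw
      exact hor.elim p q
end

section
/- Let R be a poset function on a nonempty finite set V. Then R satisfies axiom (q): for all u,v,w ∈ V, R(u,w) ∩ R(w,v) equals either {w} or ∅. -/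
/-- A poset function `R` on a nonempty finite set satisfies axiom (q):
`R(u,w) ∩ R(w,v)` equals `{w}` or `∅`. -/
theorem stmt_4 {V : Type*} [Fintype V] [Nonempty V]
    (R : V → V → Set V)
    -- (t0)
    (t0 : ∀ u v w, R u w ≠ ∅ → R w v ≠ ∅ → R u v ≠ ∅)
    -- (t1)
    (t1 : ∀ u v, R u v ≠ ∅ → u ∈ R u v ∧ v ∈ R u v)
    -- (t3)
    (t3 : ∀ u, R u u = {u})
    -- (t2a)
    (t2a : ∀ u v, R u v ≠ ∅ → u ≠ v → R v u = ∅)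
    -- (tr1)
    (tr1 : ∀ u v w, u ≠ v → R u w ≠ ∅ → R w v ≠ ∅ → R u w ∪ R w v ⊆ R u v)
    -- (tr2)
    (tr2 : ∀ u v w, u ≠ v → (R u w = ∅ ∨ R w v = ∅) → w ∉ R u v) :
    ∀ u v w, R u w ∩ R w v = {w} ∨ R u w ∩ R w v = ∅ := by
  intro u v w
  by_cases h : R u w ∩ R w v = ∅
  · exact Or.inr h
  left
  have key : ∀ x ∈ R u w ∩ R w v, x = w := by
    rintro x ⟨h1, h2⟩
    by_contra hx
    have huw : u ≠ w := by
      rintro rfl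
      rw [t3] at h1
      exact hx h1
    have hwv : w ≠ v := by
      rintro rfl
      rw [t3] at h2
      exact hx h2
    have a : R x w ≠ ∅ := fun e => tr2 u w x huw (Or.inr e) h1
    have b : R w x ≠ ∅ := fun e => tr2 w v x hwv (Or.inl e) h2
    exact b (t2a x w a hx)
  obtain ⟨x, hx⟩ := Set.nonempty_iff_ne_empty.mpr h
  have e := key x hx
  subst e
  ext y
  constructor
  · intro hy
    exact key y hy
  · intro hy
    rw [Set.mem_singleton_iff] at hy
    rw [hy]
    exact hx
end

section
/- Let R be a poset function on a nonempty finite set V, and let G_R be its underlying digraph. If w ∈ R(u,v) and R(u,v) ≠ ∅, then there exists a directed path in G_R from u to v that passes through w. -/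
/-- A directed path from `u` to `v` w.r.t. the edge relation `E`: a nonempty list of
pairwise distinct vertices starting at `u`, ending at `v`, with every consecutive pair
an edge. -/
def IsDiPath {V : Type*} (E : V → V → Prop) (u v : V) (p : List V) : Prop :=
  p.Chain' E ∧ p.Nodup ∧ p.head? = some u ∧ p.getLast? = some v

/-- The edge relation of the underlying digraph `G_R` of `R`. -/
def underlyingEdge {V : Type*} (R : V → V → Set V) (x y : V) : Prop :=
  x ≠ y ∧ R x y = {x, y}

/-- For a poset function `R`, if `w ∈ R(u,v)` and `R(u,v) ≠ ∅`, then there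
is a directed path in the underlying digraph `G_R` from `u` to `v` passing through `w`. -/
theorem stmt_5 {V : Type*} [Fintype V] [Nonempty V]
    (R : V → V → Set V)
    -- (t0)
    (t0 : ∀ u v w, R u w ≠ ∅ → R w v ≠ ∅ → R u v ≠ ∅)
    -- (t1)
    (t1 : ∀ u v, R u v ≠ ∅ → u ∈ R u v ∧ v ∈ R u v)
    -- (t3)
    (t3 : ∀ u, R u u = {u})
    -- (t2a)
    (t2a : ∀ u v, R u v ≠ ∅ → u ≠ v → R v u = ∅)
    -- (tr1)
    (tr1 : ∀ u v w, u ≠ v → R u w ≠ ∅ → R w v ≠ ∅ → R u w ∪ R w v ⊆ R u v)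
    -- (tr2)
    (tr2 : ∀ u v w, u ≠ v → (R u w = ∅ ∨ R w v = ∅) → w ∉ R u v)
    (u v w : V) (hw : w ∈ R u v) (hne : R u v ≠ ∅) :
    ∃ p : List V, IsDiPath (underlyingEdge R) u v p ∧ w ∈ p := by
  classical
  have tne : ∀ {a b c : V}, c ∈ R a b → R a b ≠ ∅ := by
    intro a b c h h0
    rw [h0] at h
    exact h
  have key : ∀ n : ℕ, ∀ x y, (R x y).ncard ≤ n → R x y ≠ ∅ →
      Relation.ReflTransGen (underlyingEdge R) x y := by
    intro n
    induction n with
    | zero =>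
      intro x y h hn
      exact absurd ((Set.ncard_eq_zero (Set.toFinite _)).1 (Nat.le_zero.1 h)) hn
    | succ n ih =>
      intro x y h hn
      by_cases hxy : x = y
      · subst hxy; exact Relation.ReflTransGen.refl
      by_cases he : R x y = {x, y}
      · exact Relation.ReflTransGen.single ⟨hxy, he⟩
      obtain ⟨hx, hy⟩ := t1 x y hn
      have : ∃ z ∈ R x y, z ≠ x ∧ z ≠ y := by
        by_contra hc
        push Not at hc
        apply he
        ext z
        constructor
        · intro hz
          by_cases hzx : z = x
          · exact Or.inl hzx
          · exact Or.inr (hc z hz hzx)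
        · rintro (rfl | hz)
          · exact hx
          · rw [Set.mem_singleton_iff] at hz
            rw [hz]; exact hy
      obtain ⟨z, hz, hzx, hzy⟩ := this
      have h1 : R x z ≠ ∅ := fun h0 => tr2 x y z hxy (Or.inl h0) hz
      have h2 : R z y ≠ ∅ := fun h0 => tr2 x y z hxy (Or.inr h0) hz
      have hsub := tr1 x y z hxy h1 h2
      have hy' : y ∉ R x z := tr2 x z y (Ne.symm hzx) (Or.inr (t2a z y h2 hzy))
      have hx' : x ∉ R z y := tr2 z y x hzy (Or.inl (t2a x z h1 (Ne.symm hzx)))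
      have c1 : (R x z).ncard < (R x y).ncard :=
        Set.ncard_lt_ncard ⟨fun a ha => hsub (Or.inl ha), fun hh => hy' (hh hy)⟩ (Set.toFinite _)
      have c2 : (R z y).ncard < (R x y).ncard :=
        Set.ncard_lt_ncard ⟨fun a ha => hsub (Or.inr ha), fun hh => hx' (hh hx)⟩ (Set.toFinite _)
      exact (ih x z (by omega) h1).trans (ih z y (by omega) h2)
  have huw : R u w ≠ ∅ ∧ R w v ≠ ∅ := by
    by_cases huv : u = v
    · subst huv
      rw [t3] at hw
      rw [Set.mem_singleton_iff] at hw
      subst hw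
      exact ⟨hne, hne⟩
    · exact ⟨fun h0 => tr2 u v w huv (Or.inl h0) hw, fun h0 => tr2 u v w huv (Or.inr h0) hw⟩
  have r1 := key _ u w le_rfl huw.1
  have r2 := key _ w v le_rfl huw.2
  have p2 : ∃ l : List V, (w :: l).IsChain (underlyingEdge R) ∧ (w :: l).getLast? = some v := by
    refine Relation.ReflTransGen.head_induction_on r2 ⟨[], by simp, by simp⟩ ?_
    rintro a b hab - ⟨l, hl, hv⟩
    exact ⟨b :: l, List.isChain_cons_cons.2 ⟨hab, hl⟩, by rw [List.getLast?_cons_cons]; exact hv⟩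
  have p1 : ∃ l : List V, (u :: l).IsChain (underlyingEdge R) ∧ (u :: l).getLast? = some v ∧
      w ∈ u :: l := by
    refine Relation.ReflTransGen.head_induction_on r1 ?_ ?_
    · obtain ⟨l, hl, hv⟩ := p2
      exact ⟨l, hl, hv, by simp⟩
    · rintro a b hab - ⟨l, hl, hv, hm⟩
      exact ⟨b :: l, List.isChain_cons_cons.2 ⟨hab, hl⟩,
        by rw [List.getLast?_cons_cons]; exact hv, List.mem_cons_of_mem _ hm⟩
  obtain ⟨l, hl, hv, hm⟩ := p1
  refine ⟨u :: l, ⟨hl, ?_, rfl, hv⟩, hm⟩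
  let S : V → V → Prop := fun a b => a ≠ b ∧ R a b ≠ ∅
  have : IsTrans V S := ⟨by
    rintro a b c ⟨h1, h2⟩ ⟨h3, h4⟩
    refine ⟨?_, t0 _ _ _ h2 h4⟩
    rintro rfl
    exact h4 (t2a _ _ h2 h1)⟩
  have hS : (u :: l).IsChain S := hl.imp (fun a b hab => ⟨hab.1, by
    rw [hab.2]; exact (Set.insert_nonempty _ _).ne_empty⟩)
  exact (List.isChain_iff_pairwise.1 hS).imp (fun h => h.1)
end

section
/- Let R be a poset function on a nonempty finite set V, let G_R be its underlying digraph, and let A_{G_R} be the all-paths transit function of G_R. Then G_R is a directed acyclic graph (it contains no directed cycle) and R = A_{G_R}, i.e., for all u,v ∈ V, R(u,v) is exactly the set of vertices lying on some directed path from u to v in G_R. -/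
/-- The all-paths transit function of the digraph with edge relation `E`. -/
def allPaths {V : Type*} (E : V → V → Prop) (u v : V) : Set V :=
  {x : V | ∃ p : List V, IsDiPath E u v p ∧ x ∈ p}

/-- For a poset function `R`, the underlying digraph `G_R` is a DAG (no
directed cycle, i.e. no directed path from `u` to `v` together with an edge `(v,u)`),
and `R` equals the all-paths transit function of `G_R`. -/
theorem stmt_6 {V : Type*} [Fintype V] [Nonempty V]
    (R : V → V → Set V)
    -- (t0)
    (t0 : ∀ u v w, R u w ≠ ∅ → R w v ≠ ∅ → R u v ≠ ∅)
    -- (t1)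
    (t1 : ∀ u v, R u v ≠ ∅ → u ∈ R u v ∧ v ∈ R u v)
    -- (t3)
    (t3 : ∀ u, R u u = {u})
    -- (t2a)
    (t2a : ∀ u v, R u v ≠ ∅ → u ≠ v → R v u = ∅)
    -- (tr1)
    (tr1 : ∀ u v w, u ≠ v → R u w ≠ ∅ → R w v ≠ ∅ → R u w ∪ R w v ⊆ R u v)
    -- (tr2)
    (tr2 : ∀ u v w, u ≠ v → (R u w = ∅ ∨ R w v = ∅) → w ∉ R u v) :
    -- G_R is acyclic
    (∀ (u v : V) (p : List V),
        IsDiPath (underlyingEdge R) u v p → ¬ underlyingEdge R v u) ∧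
    -- R = A_{G_R}
    (∀ u v, R u v = allPaths (underlyingEdge R) u v) := by
  have lt_edge : ∀ x y, underlyingEdge R x y → (x ≠ y ∧ R x y ≠ ∅) := by
    rintro x y ⟨h, e⟩
    refine ⟨h, ?_⟩
    rw [e]
    exact (Set.insert_nonempty x {y}).ne_empty
  have rfl' : ∀ x, R x x ≠ ∅ := fun x => by
    rw [t3]; exact (Set.singleton_nonempty x).ne_empty
  have anti : ∀ x y, R x y ≠ ∅ → R y x ≠ ∅ → x = y := by
    intro x y h1 h2
    by_contra h
    exact h2 (t2a x y h1 h)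
  have hmem : ∀ u v x, x ∈ R u v ↔ (R u x ≠ ∅ ∧ R x v ≠ ∅) := by
    intro u v x
    by_cases huv : u = v
    · subst huv
      rw [t3]
      constructor
      · intro h
        have h : x = u := h
        subst h
        exact ⟨rfl' x, rfl' x⟩
      · rintro ⟨h1, h2⟩
        exact (anti _ _ h1 h2).symm
    · constructor
      · intro h
        by_contra h'
        refine tr2 u v x huv ?_ h
        tauto
      · rintro ⟨h1, h2⟩
        exact tr1 u v x huv h1 h2 (Or.inl (t1 u x h1).2)
  have ltT : IsTrans V (fun x y => x ≠ y ∧ R x y ≠ ∅) := by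
    refine ⟨?_⟩
    rintro a b c ⟨h1, h2⟩ ⟨h3, h4⟩
    refine ⟨?_, t0 _ _ _ h2 h4⟩
    rintro rfl
    exact h1 (anti _ _ h2 h4)
  have pw : ∀ p : List V, List.IsChain (underlyingEdge R) p →
      p.Pairwise (fun x y => x ≠ y ∧ R x y ≠ ∅) := by
    intro p hp
    exact List.isChain_iff_pairwise.1 (hp.imp lt_edge)
  have path_le : ∀ u v p, IsDiPath (underlyingEdge R) u v p → ∀ x ∈ p,
      R u x ≠ ∅ ∧ R x v ≠ ∅ := by
    rintro u v p ⟨hc, -, hh, hl⟩ x hx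
    have hp := pw p hc
    constructor
    · obtain ⟨l, rfl⟩ := List.head?_eq_some_iff.1 hh
      rcases List.mem_cons.1 hx with rfl | hx
      · exact rfl' x
      · exact ((List.pairwise_cons.1 hp).1 x hx).2
    · obtain ⟨l, rfl⟩ := List.getLast?_eq_some_iff.1 hl
      rcases List.mem_append.1 hx with hx | hx
      · exact ((List.pairwise_append.1 hp).2.2 x hx v (by simp)).2
      · rw [List.mem_singleton.1 hx]; exact rfl' v
  have ex : ∀ n : ℕ, ∀ u v, (R u v).ncard = n → R u v ≠ ∅ →
      Relation.ReflTransGen (underlyingEdge R) u v := by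
    intro n
    induction n using Nat.strong_induction_on with
    | _ n ih =>
      intro u v hn huv
      by_cases h : u = v
      · subst h; exact .refl
      by_cases he : R u v = {u, v}
      · exact .single ⟨h, he⟩
      have : ∃ x ∈ R u v, x ≠ u ∧ x ≠ v := by
        by_contra! hx
        apply he
        ext y
        constructor
        · intro hy
          by_cases hyu : y = u
          · exact Or.inl hyu
          · exact Or.inr (hx y hy hyu)
        · rintro (rfl | rfl)
          · exact (t1 _ _ huv).1
          · exact (t1 _ _ huv).2
      obtain ⟨x, hx, hxu, hxv⟩ := this
      obtain ⟨h1, h2⟩ := (hmem _ _ _).1 hx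
      have s := tr1 u v x h h1 h2
      have c1 : (R u x).ncard < n := by
        rw [← hn]
        refine Set.ncard_lt_ncard ⟨fun y hy => s (Or.inl hy), fun hs => ?_⟩ (Set.toFinite _)
        exact hxv (anti _ _ h2 ((hmem _ _ _).1 (hs (t1 _ _ huv).2)).2)
      have c2 : (R x v).ncard < n := by
        rw [← hn]
        refine Set.ncard_lt_ncard ⟨fun y hy => s (Or.inr hy), fun hs => ?_⟩ (Set.toFinite _)
        exact hxu (anti _ _ ((hmem _ _ _).1 (hs (t1 _ _ huv).1)).1 h1)
      exact (ih _ c1 u x rfl h1).trans (ih _ c2 x v rfl h2)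
  have lst : ∀ u v, Relation.ReflTransGen (underlyingEdge R) u v →
      ∃ l, List.IsChain (underlyingEdge R) (u :: l) ∧ (u :: l).getLast? = some v := by
    intro u v h
    induction h using Relation.ReflTransGen.head_induction_on with
    | refl => exact ⟨[], by simp, by simp⟩
    | head hab _ ih =>
      obtain ⟨l, h1, h2⟩ := ih
      exact ⟨_ :: l, List.isChain_cons_cons.2 ⟨hab, h1⟩, by simpa using h2⟩
  constructor
  · intro u v p hp he
    have hv : v ∈ p := List.mem_of_getLast? hp.2.2.2
    obtain ⟨h1, h2⟩ := lt_edge _ _ he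
    exact h1 (anti _ _ h2 (path_le u v p hp v hv).1)
  · intro u v
    ext x
    rw [hmem]
    constructor
    · rintro ⟨h1, h2⟩
      obtain ⟨l, hl, hl'⟩ := lst _ _ (ex _ u x rfl h1)
      obtain ⟨m, hm, hm'⟩ := lst _ _ (ex _ x v rfl h2)
      obtain ⟨k, hk⟩ := List.getLast?_eq_some_iff.1 hl'
      have hc : List.IsChain (underlyingEdge R) (k ++ x :: m) := by
        rw [List.isChain_split]
        exact ⟨hk ▸ hl, hm⟩
      refine ⟨k ++ x :: m, ⟨hc, (pw _ hc).imp (fun h => h.1), ?_, ?_⟩, by simp⟩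
      · cases k with
        | nil => simp at hk; simp [hk.1]
        | cons a k => simp at hk; simp [hk.1]
      · rw [List.getLast?_append, hm']; simp
    · rintro ⟨p, hp, hx⟩
      exact path_le u v p hp x hx
end

section
/- Let G be a finite directed acyclic graph, let R_G = A_G be its all-paths transit function, and let G_{R_G} be the underlying digraph of R_G. Then G = G_{R_G} if and only if G contains no shortcut, i.e., no edge (x_1, x_k) for which G contains a directed path from x_1 to x_k of length at least 2. -/
/-- Let `G` be a finite DAG with (irreflexive) edge relation `E`, let
`R_G = A_G` be its all-paths transit function. Then `G` coincides with the underlying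
digraph of `R_G` if and only if `G` contains no shortcut, i.e. no edge `(x,y)` for which
there is a directed path from `x` to `y` of length at least 2 (at least 3 vertices). -/
theorem stmt_7 {V : Type*} [Fintype V]
    (E : V → V → Prop)
    (h_irrefl : ∀ x, ¬ E x x)
    -- G is acyclic: no directed path from u to v closed up by an edge (v,u)
    (h_acyclic : ∀ (u v : V) (p : List V), IsDiPath E u v p → ¬ E v u) :
    (∀ x y, E x y ↔ underlyingEdge (allPaths E) x y)
    ↔
    ¬ (∃ (x y : V) (p : List V), E x y ∧ IsDiPath E x y p ∧ 3 ≤ p.length) := by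
  have key : ∀ (x y : V) (p : List V), p.Nodup → (∀ z ∈ p, z = x ∨ z = y) →
      ¬ 3 ≤ p.length := by
    intro x y p hn hz hl
    match p, hn, hz, hl with
    | a :: b :: c :: l, hn, hz, _ =>
      have ha := hz a (by simp)
      have hb := hz b (by simp)
      have hc := hz c (by simp)
      simp only [List.nodup_cons, List.mem_cons, not_or] at hn
      grind
  have short : ∀ (x y : V) (p : List V), x ≠ y → IsDiPath E x y p → ¬ 3 ≤ p.length →
      p = [x, y] ∧ E x y := by
    intro x y p hne hp hl
    obtain ⟨h1, -, h3, h4⟩ := hp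
    match p, h1, h3, h4, hl with
    | [], _, h3, _, _ => simp at h3
    | [a], _, h3, h4, _ =>
      simp at h3 h4
      exact absurd (h3.symm.trans h4) hne
    | [a, b], h1, h3, h4, _ =>
      simp at h3 h4
      subst h3 h4
      exact ⟨rfl, List.isChain_pair.1 h1⟩
    | a :: b :: c :: l, _, _, _, hl => exact absurd (by simp) hl
  constructor
  · rintro h ⟨x, y, p, hE, hp, hl⟩
    obtain ⟨-, hR⟩ := (h x y).1 hE
    refine key x y p hp.2.1 (fun z hz => ?_) hl
    have : z ∈ allPaths E x y := ⟨p, hp, hz⟩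
    rw [hR] at this
    simpa using this
  · intro h x y
    constructor
    · intro hE
      have hne : x ≠ y := fun e => h_irrefl x (by rw [← e] at hE; exact hE)
      refine ⟨hne, ?_⟩
      ext z
      constructor
      · rintro ⟨p, hp, hz⟩
        have := (short x y p hne hp (fun hl => h ⟨x, y, p, hE, hp, hl⟩)).1
        subst this
        simpa using hz
      · intro hz
        refine ⟨[x, y], ⟨List.isChain_pair.2 hE, by simpa using hne, rfl, rfl⟩, by simpa using hz⟩
    · rintro ⟨hne, hR⟩
      have hx : x ∈ allPaths E x y := by rw [hR]; simp
      obtain ⟨p, hp, -⟩ := hx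
      refine (short x y p hne hp (key x y p hp.2.1 (fun z hz => ?_))).2
      have : z ∈ allPaths E x y := ⟨p, hp, hz⟩
      rw [hR] at this
      simpa using this
end

section
/- Let R be a poset function on a nonempty finite set V. Then R satisfies all of the following: (m) x,y ∈ R(u,v) implies R(x,y) ⊆ R(u,v); (b1₁) x ∈ R(u,v) and x ≠ v implies v ∉ R(u,x); (b1₂) x ∈ R(u,v) and x ≠ u implies u ∉ R(x,v); (b2₁) x ∈ R(u,v) implies R(u,x) ⊆ R(u,v); (b2₂) x ∈ R(u,v) implies R(x,v) ⊆ R(u,v); (b3₁) x ∈ R(u,v) and y ∈ R(u,x) implies x ∈ R(y,v); (b3₂) x ∈ R(u,v) and y ∈ R(x,v) implies x ∈ R(u,y); (b4) x ∈ R(u,v) implies R(u,x) ∩ R(x,v) = {x}; (Ch) x ∈ R(u,v) and y ∈ R(x,w) implies y ∈ R(u,w) or y ∈ R(v,w) or y ∈ R(u,v); (j0) x ∈ R(u,y) and y ∈ R(x,v) implies x ∈ R(u,v). -/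
/-- Every poset function `R` on a nonempty finite set satisfies the
betweenness axioms (m), (b1₁), (b1₂), (b2₁), (b2₂), (b3₁), (b3₂), (b4), (Ch), (j0). -/
theorem stmt_8 {V : Type*} [Fintype V] [Nonempty V]
    (R : V → V → Set V)
    -- (t0)
    (t0 : ∀ u v w, R u w ≠ ∅ → R w v ≠ ∅ → R u v ≠ ∅)
    -- (t1)
    (t1 : ∀ u v, R u v ≠ ∅ → u ∈ R u v ∧ v ∈ R u v)
    -- (t3)
    (t3 : ∀ u, R u u = {u})
    -- (t2a)
    (t2a : ∀ u v, R u v ≠ ∅ → u ≠ v → R v u = ∅)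
    -- (tr1)
    (tr1 : ∀ u v w, u ≠ v → R u w ≠ ∅ → R w v ≠ ∅ → R u w ∪ R w v ⊆ R u v)
    -- (tr2)
    (tr2 : ∀ u v w, u ≠ v → (R u w = ∅ ∨ R w v = ∅) → w ∉ R u v) :
    -- (m)
    (∀ u v x y, x ∈ R u v → y ∈ R u v → R x y ⊆ R u v) ∧
    -- (b1₁)
    (∀ u v x, x ∈ R u v → x ≠ v → v ∉ R u x) ∧
    -- (b1₂)
    (∀ u v x, x ∈ R u v → x ≠ u → u ∉ R x v) ∧
    -- (b2₁)
    (∀ u v x, x ∈ R u v → R u x ⊆ R u v) ∧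
    -- (b2₂)
    (∀ u v x, x ∈ R u v → R x v ⊆ R u v) ∧
    -- (b3₁)
    (∀ u v x y, x ∈ R u v → y ∈ R u x → x ∈ R y v) ∧
    -- (b3₂)
    (∀ u v x y, x ∈ R u v → y ∈ R x v → x ∈ R u y) ∧
    -- (b4)
    (∀ u v x, x ∈ R u v → R u x ∩ R x v = {x}) ∧
    -- (Ch)
    (∀ u v w x y, x ∈ R u v → y ∈ R x w → y ∈ R u w ∨ y ∈ R v w ∨ y ∈ R u v) ∧
    -- (j0)
    (∀ u v x y, x ∈ R u y → y ∈ R x v → x ∈ R u v) := by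
  have key : ∃ le : V → V → Prop, (∀ a, le a a) ∧ (∀ a b c, le a b → le b c → le a c) ∧
      (∀ a b, le a b → le b a → a = b) ∧ (∀ u v x, x ∈ R u v ↔ le u x ∧ le x v) := by
    have anti : ∀ a b, R a b ≠ ∅ → R b a ≠ ∅ → a = b := by
      intro a b h1 h2
      by_contra hne
      exact h2 (t2a a b h1 hne)
    have rf : ∀ a, R a a ≠ ∅ := by
      intro a
      rw [t3]
      exact Set.singleton_ne_empty a
    refine ⟨fun a b => R a b ≠ ∅, rf, fun a b c h1 h2 => t0 a c b h1 h2, anti, ?_⟩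
    intro u v x
    by_cases huv : u = v
    · subst huv
      constructor
      · intro h
        rw [t3, Set.mem_singleton_iff] at h
        subst h
        exact ⟨rf _, rf _⟩
      · rintro ⟨h1, h2⟩
        rw [t3, Set.mem_singleton_iff]
        exact anti _ _ h2 h1
    · constructor
      · intro h
        exact ⟨fun h1 => tr2 u v x huv (Or.inl h1) h, fun h1 => tr2 u v x huv (Or.inr h1) h⟩
      · rintro ⟨h1, h2⟩
        exact tr1 u v x huv h1 h2 (Or.inl (t1 u x h1).2)
  obtain ⟨le, rf, tr, anti, key⟩ := key
  clear t0 t1 t3 t2a tr1 tr2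
  simp only [Set.subset_def, Set.ext_iff, Set.mem_inter_iff, Set.mem_singleton_iff, key]
  refine ⟨?_, ?_, ?_, ?_, ?_, ?_, ?_, ?_, ?_, ?_⟩ <;> grind
end

section
/- Let R be a poset function on a nonempty finite set V satisfying axiom (r). Then the underlying digraph G_R contains a unique source vertex, i.e., a unique vertex with no incoming edge. -/
/-- Let `R` be a poset function on a nonempty finite set satisfying axiom
(r). Then the underlying digraph `G_R` contains a unique source vertex (a vertex with no
incoming edge). -/
theorem stmt_11 {V : Type*} [Fintype V] [Nonempty V]
    (R : V → V → Set V)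
    -- (t0)
    (t0 : ∀ u v w, R u w ≠ ∅ → R w v ≠ ∅ → R u v ≠ ∅)
    -- (t1)
    (t1 : ∀ u v, R u v ≠ ∅ → u ∈ R u v ∧ v ∈ R u v)
    -- (t3)
    (t3 : ∀ u, R u u = {u})
    -- (t2a)
    (t2a : ∀ u v, R u v ≠ ∅ → u ≠ v → R v u = ∅)
    -- (tr1)
    (tr1 : ∀ u v w, u ≠ v → R u w ≠ ∅ → R w v ≠ ∅ → R u w ∪ R w v ⊆ R u v)
    -- (tr2)
    (tr2 : ∀ u v w, u ≠ v → (R u w = ∅ ∨ R w v = ∅) → w ∉ R u v)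
    -- (r)
    (axr : ∀ u v, R u v = ∅ → R v u = ∅ → ∃ w, R w u ≠ ∅ ∧ R w v ≠ ∅) :
    ∃! w : V, ∀ x : V, ¬ underlyingEdge R x w := by
  classical
  have refl : ∀ a, R a a ≠ ∅ := fun a => by rw [t3]; simp
  have anti : ∀ a b, R a b ≠ ∅ → R b a ≠ ∅ → a = b := fun a b h1 h2 => by
    by_contra h
    exact h2 (t2a a b h1 h)
  let _ :  PartialOrder V :=
    { le := fun a b => R a b ≠ ∅
      le_refl := refl
      le_trans := fun a b c h1 h2 => t0 a c b h1 h2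
      le_antisymm := anti }
  have le_def : ∀ a b : V, a ≤ b ↔ R a b ≠ ∅ := fun a b => Iff.rfl
  have key : ∀ w : V, (∀ x : V, ¬ underlyingEdge R x w) ↔ IsMin w := by
    intro w
    constructor
    · intro h
      by_contra hm
      obtain ⟨x, hx⟩ := not_isMin_iff.mp hm
      obtain ⟨y, hy⟩ := (Set.toFinite {x : V | x < w}).exists_maximal ⟨x, hx⟩
      have hyw : y < w := hy.1
      refine h y ⟨hyw.ne, ?_⟩
      ext z
      constructor
      · intro hz
        have h1 : y ≤ z := fun h0 => tr2 y w z hyw.ne (Or.inl h0) hz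
        have h2 : z ≤ w := fun h0 => tr2 y w z hyw.ne (Or.inr h0) hz
        rcases h2.eq_or_lt with h3 | h3
        · exact Or.inr h3
        · exact Or.inl (le_antisymm (hy.2 h3 h1) h1)
      · rintro (rfl | rfl)
        · exact (t1 _ _ hyw.le).1
        · exact (t1 _ _ hyw.le).2
    · rintro hm x ⟨hne, he⟩
      have hle : x ≤ w := by
        rw [le_def, he]
        exact (Set.insert_nonempty x {w}).ne_empty
      exact hne (le_antisymm hle (hm hle))
  obtain ⟨m, hm⟩ := (Set.toFinite (Set.univ : Set V)).exists_minimal Set.univ_nonempty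
  have hm : IsMin m := fun b hb => hm.2 (Set.mem_univ b) hb
  refine ⟨m, (key m).2 hm, ?_⟩
  intro n hn
  have hn : IsMin n := (key n).1 hn
  by_cases h1 : m ≤ n
  · exact le_antisymm (hn h1) h1
  by_cases h2 : n ≤ m
  · exact le_antisymm h2 (hm h2)
  obtain ⟨w, hw1, hw2⟩ := axr m n (not_not.mp h1) (not_not.mp h2)
  have h3 : w ≤ m := hw1
  have h4 : w ≤ n := hw2
  exact absurd ((hm h3).trans h4) h1
end

section
/- Let R be a poset function on a nonempty finite set V satisfying axioms (p) and (hy), and let G_R be its underlying digraph. Then G_R is a rooted directed forest (a directed acyclic graph in which every vertex has at most one incoming edge), and R equals the all-paths transit function of G_R: for all u,v ∈ V, R(u,v) is the set of vertices lying on some directed path from u to v in G_R. -/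
theorem ex_list {V : Type*} {E : V → V → Prop} {u v : V} (h : Relation.ReflTransGen E u v) :
    ∃ l : List V, (u :: l).IsChain E ∧ (u :: l).getLast? = some v := by
  induction h using Relation.ReflTransGen.head_induction_on with
  | refl => exact ⟨[], by simp, by simp⟩
  | head hab _ ih =>
    obtain ⟨l, h1, h2⟩ := ih
    exact ⟨_ :: l, List.isChain_cons_cons.2 ⟨hab, h1⟩, by rw [List.getLast?_cons_cons]; exact h2⟩

theorem path_bounds {V : Type*} [PartialOrder V] {E : V → V → Prop}
    (hE : ∀ x y, E x y → x < y) {p : List V} :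
    ∀ {u v : V}, p.IsChain E → p.head? = some u → p.getLast? = some v →
      p.Nodup ∧ u ≤ v ∧ ∀ x ∈ p, u ≤ x ∧ x ≤ v := by
  induction p with
  | nil => intro u v _ h; simp at h
  | cons a l ih =>
    intro u v hc hh hl
    simp only [List.head?_cons, Option.some.injEq] at hh
    subst hh
    cases l with
    | nil => simp at hl; subst hl; simp
    | cons b l =>
      rw [List.isChain_cons_cons] at hc
      rw [List.getLast?_cons_cons] at hl
      obtain ⟨h1, h2, h3⟩ := ih (u := b) hc.2 (by simp) hl
      have hab := hE _ _ hc.1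
      refine ⟨List.nodup_cons.2 ⟨fun h => absurd (h3 _ h).1 hab.not_ge, h1⟩, hab.le.trans h2, ?_⟩
      intro x hx
      rcases List.mem_cons.1 hx with rfl | hx
      · exact ⟨le_rfl, hab.le.trans h2⟩
      · exact ⟨hab.le.trans (h3 x hx).1, (h3 x hx).2⟩

theorem ex_path {V : Type*} [PartialOrder V] [Finite V] {E : V → V → Prop}
    (hE : ∀ x y : V, x ⋖ y → E x y) {u v : V} (h : u ≤ v) :
    Relation.ReflTransGen E u v := by
  classical
  have := Fintype.ofFinite V
  letI : DecidableLE V := Classical.decRel _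
  letI : DecidableLT V := Classical.decRel _
  letI := Fintype.toLocallyFiniteOrder (α := V)
  exact Relation.ReflTransGen.mono hE _ _ (le_iff_reflTransGen_covBy.1 h)

/-- Let `R` be a poset function on a nonempty finite set satisfying (p)
and (hy). Then the underlying digraph `G_R` is a rooted directed forest (a DAG in which
every vertex has at most one incoming edge), and `R` equals the all-paths transit
function of `G_R`. -/
theorem stmt_12 {V : Type*} [Fintype V] [Nonempty V]
    (R : V → V → Set V)
    -- (t0)
    (t0 : ∀ u v w, R u w ≠ ∅ → R w v ≠ ∅ → R u v ≠ ∅)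
    -- (t1)
    (t1 : ∀ u v, R u v ≠ ∅ → u ∈ R u v ∧ v ∈ R u v)
    -- (t3)
    (t3 : ∀ u, R u u = {u})
    -- (t2a)
    (t2a : ∀ u v, R u v ≠ ∅ → u ≠ v → R v u = ∅)
    -- (tr1)
    (tr1 : ∀ u v w, u ≠ v → R u w ≠ ∅ → R w v ≠ ∅ → R u w ∪ R w v ⊆ R u v)
    -- (tr2)
    (tr2 : ∀ u v w, u ≠ v → (R u w = ∅ ∨ R w v = ∅) → w ∉ R u v)
    -- (p)
    (axp : ∀ u v w, w ∈ R u v → R u w ∪ R w v = R u v)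
    -- (hy)
    (axhy : ∀ x y v, R x v ≠ ∅ → R y v ≠ ∅ → x ∈ R y v ∨ y ∈ R x v) :
    -- G_R is acyclic
    (∀ (u v : V) (p : List V),
        IsDiPath (underlyingEdge R) u v p → ¬ underlyingEdge R v u) ∧
    -- every vertex of G_R has in-degree at most one
    (∀ v x y : V, underlyingEdge R x v → underlyingEdge R y v → x = y) ∧
    -- R = A_{G_R}
    (∀ u v, R u v = allPaths (underlyingEdge R) u v) := by
  have hRle : ∀ u v w, w ∈ R u v → R u w ≠ ∅ ∧ R w v ≠ ∅ := by
    intro u v w hw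
    by_cases huv : u = v
    · subst huv
      rw [t3, Set.mem_singleton_iff] at hw
      subst hw
      simp [t3]
    · by_contra hcon
      exact tr2 u v w huv (by tauto) hw
  letI : PartialOrder V :=
    { le := fun x y => R x y ≠ ∅
      le_refl := fun x => by simp [t3]
      le_trans := fun a b c h1 h2 => t0 a c b h1 h2
      le_antisymm := fun a b h1 h2 => by
        by_contra hne
        exact h2 (t2a a b h1 hne) }
  have hle : ∀ x y : V, x ≤ y ↔ R x y ≠ ∅ := fun x y => Iff.rfl
  have hmem : ∀ u v w, w ∈ R u v ↔ u ≤ w ∧ w ≤ v := by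
    intro u v w
    refine ⟨hRle u v w, fun ⟨h1, h2⟩ => ?_⟩
    by_cases huv : u = v
    · subst huv
      rw [t3, Set.mem_singleton_iff]
      exact le_antisymm h2 h1
    · exact tr1 u v w huv h1 h2 (Or.inl (t1 u w h1).2)
  have hlt : ∀ x y : V, underlyingEdge R x y → x < y := by
    rintro x y ⟨h1, h2⟩
    refine lt_of_le_of_ne ?_ h1
    rw [hle, h2]
    exact (Set.insert_nonempty _ _).ne_empty
  have hcov : ∀ x y : V, x ⋖ y → underlyingEdge R x y := by
    intro x y h
    refine ⟨h.lt.ne, ?_⟩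
    ext w
    rw [hmem, ← Set.mem_Icc, h.Icc_eq]
  refine ⟨?_, ?_, ?_⟩
  · rintro u v p ⟨hc, hn, hh, hl⟩ he
    exact absurd (path_bounds hlt hc hh hl).2.1 (hlt _ _ he).not_ge
  · intro v x y hx hy
    rcases axhy x y v (hlt _ _ hx).le (hlt _ _ hy).le with h | h
    · rw [hy.2] at h
      exact h.resolve_right hx.1
    · rw [hx.2] at h
      exact (h.resolve_right hy.1).symm
  · intro u v
    ext x
    rw [hmem]
    constructor
    · rintro ⟨h1, h2⟩
      obtain ⟨l1, c1, e1⟩ := ex_list (ex_path hcov h1)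
      obtain ⟨l2, c2, e2⟩ := ex_list (ex_path hcov h2)
      have hc : ((u :: l1) ++ l2).IsChain (underlyingEdge R) := by
        rw [List.isChain_append]
        rw [List.isChain_cons] at c2
        refine ⟨c1, c2.2, ?_⟩
        intro a ha b hb
        rw [e1] at ha
        cases ha
        exact c2.1 b hb
      have hl : ((u :: l1) ++ l2).getLast? = some v := by
        rw [List.getLast?_append, e1]
        rw [List.getLast?_cons] at e2
        clear * - e2
        cases hh : l2.getLast? <;> simpa [hh] using e2
      have hh : ((u :: l1) ++ l2).head? = some u := by simp
      exact ⟨_, ⟨hc, (path_bounds hlt hc hh hl).1, hh, hl⟩,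
        List.mem_append_left _ (List.mem_of_getLast? e1)⟩
    · rintro ⟨p, ⟨hc, _, hh, hl⟩, hx⟩
      exact (path_bounds hlt hc hh hl).2.2 x hx
end

section
/- Let R be a poset function on a nonempty finite set V satisfying axioms (r) and (p), and let G_R be its underlying digraph. Then G_R is a rooted directed tree: a directed acyclic graph in which every vertex has at most one incoming edge and which contains a root vertex w from which there is a directed path to every other vertex. Moreover, R equals the all-paths transit function of G_R. -/
open Classical in
theorem aux_path {V : Type*} [Fintype V] [PartialOrder V] {u v : V} (h : u ≤ v) :
    ∃ l : List V, (u :: l).IsChain (· ⋖ ·) ∧ (u :: l).getLast? = some v := by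
  letI : LocallyFiniteOrder V := Fintype.toLocallyFiniteOrder
  rw [le_iff_reflTransGen_covBy] at h
  induction h using Relation.ReflTransGen.head_induction_on with
  | refl => exact ⟨[], by simp⟩
  | head hab _ ih =>
    obtain ⟨l, hl, hv⟩ := ih
    exact ⟨_ :: l, List.isChain_cons_cons.2 ⟨hab, hl⟩, by simpa using hv⟩

open Classical in
theorem aux_path_mem {V : Type*} [Fintype V] [PartialOrder V] {u x v : V} (h : u ≤ x)
    (h2 : x ≤ v) :
    ∃ l : List V, (u :: l).IsChain (· ⋖ ·) ∧ (u :: l).getLast? = some v ∧ x ∈ u :: l := by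
  letI : LocallyFiniteOrder V := Fintype.toLocallyFiniteOrder
  rw [le_iff_reflTransGen_covBy] at h
  induction h using Relation.ReflTransGen.head_induction_on with
  | refl =>
    obtain ⟨l, hl, hv⟩ := aux_path h2
    exact ⟨l, hl, hv, by simp⟩
  | head hab _ ih =>
    obtain ⟨l, hl, hv, hx⟩ := ih
    exact ⟨_ :: l, List.isChain_cons_cons.2 ⟨hab, hl⟩, by simpa using hv, List.mem_cons_of_mem _ hx⟩

theorem aux_allPaths {V : Type*} [Fintype V] [PartialOrder V] (u v x : V) :
    x ∈ allPaths (· ⋖ ·) u v ↔ u ≤ x ∧ x ≤ v := by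
  constructor
  · rintro ⟨p, ⟨hc, -, hh, hl⟩, hx⟩
    have hc' : p.Pairwise (· < ·) := (List.IsChain.imp (fun _ _ h => CovBy.lt h) hc).pairwise
    constructor
    · obtain ⟨l, rfl⟩ := List.head?_eq_some_iff.1 hh
      rcases List.mem_cons.1 hx with rfl | hx
      · exact le_rfl
      · exact ((List.pairwise_cons.1 hc').1 x hx).le
    · obtain ⟨l, rfl⟩ := List.getLast?_eq_some_iff.1 hl
      rcases List.mem_append.1 hx with hx | hx
      · exact ((List.pairwise_append.1 hc').2.2 x hx v (by simp)).le
      · simp at hx; exact hx.le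
  · rintro ⟨h1, h2⟩
    obtain ⟨l, hl, hv, hx⟩ := aux_path_mem h1 h2
    refine ⟨u :: l, ⟨hl, ?_, rfl, hv⟩, hx⟩
    have hc' : (u :: l).Pairwise (· < ·) := (List.IsChain.imp (fun _ _ h => CovBy.lt h) hl).pairwise
    exact hc'.imp (fun h => h.ne)

/-- Let `R` be a poset function on a nonempty finite set satisfying (r)
and (p). Then the underlying digraph `G_R` is a rooted directed tree: it is acyclic,
every vertex has at most one incoming edge, and there is a root vertex `w` with a
directed path from `w` to every other vertex. Moreover `R` equals the all-paths transit
function of `G_R`. -/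
theorem stmt_13 {V : Type*} [Fintype V] [Nonempty V]
    (R : V → V → Set V)
    -- (t0)
    (t0 : ∀ u v w, R u w ≠ ∅ → R w v ≠ ∅ → R u v ≠ ∅)
    -- (t1)
    (t1 : ∀ u v, R u v ≠ ∅ → u ∈ R u v ∧ v ∈ R u v)
    -- (t3)
    (t3 : ∀ u, R u u = {u})
    -- (t2a)
    (t2a : ∀ u v, R u v ≠ ∅ → u ≠ v → R v u = ∅)
    -- (tr1)
    (tr1 : ∀ u v w, u ≠ v → R u w ≠ ∅ → R w v ≠ ∅ → R u w ∪ R w v ⊆ R u v)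
    -- (tr2)
    (tr2 : ∀ u v w, u ≠ v → (R u w = ∅ ∨ R w v = ∅) → w ∉ R u v)
    -- (p)
    (axp : ∀ u v w, w ∈ R u v → R u w ∪ R w v = R u v)
    -- (r)
    (axr : ∀ u v, R u v = ∅ → R v u = ∅ → ∃ w, R w u ≠ ∅ ∧ R w v ≠ ∅) :
    -- G_R is acyclic
    (∀ (u v : V) (p : List V),
        IsDiPath (underlyingEdge R) u v p → ¬ underlyingEdge R v u) ∧
    -- every vertex of G_R has in-degree at most one
    (∀ v x y : V, underlyingEdge R x v → underlyingEdge R y v → x = y) ∧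
    -- G_R has a root: a vertex with a directed path to every other vertex
    (∃ w : V, ∀ v : V, v ≠ w → ∃ p : List V, IsDiPath (underlyingEdge R) w v p) ∧
    -- R = A_{G_R}
    (∀ u v, R u v = allPaths (underlyingEdge R) u v) := by
  classical
  have ne_self : ∀ u, R u u ≠ ∅ := fun u => by rw [t3]; exact Set.singleton_ne_empty u
  letI : PartialOrder V :=
    { le := fun u v => R u v ≠ ∅
      le_refl := ne_self
      le_trans := fun a b c h1 h2 => t0 a c b h1 h2
      le_antisymm := fun a b h1 h2 => by
        by_contra hne
        exact h2 (t2a a b h1 hne) }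
  have le_def : ∀ u v : V, u ≤ v ↔ R u v ≠ ∅ := fun _ _ => Iff.rfl
  have mem_iff : ∀ u v x : V, x ∈ R u v ↔ u ≤ x ∧ x ≤ v := by
    intro u v x
    by_cases huv : u = v
    · subst huv
      rw [t3, Set.mem_singleton_iff]
      exact ⟨fun h => ⟨h.ge, h.le⟩, fun h => le_antisymm h.2 h.1⟩
    · constructor
      · intro hx
        constructor
        · exact fun h => tr2 u v x huv (Or.inl h) hx
        · exact fun h => tr2 u v x huv (Or.inr h) hx
      · rintro ⟨h1, h2⟩
        exact tr1 u v x huv h1 h2 (Or.inl (t1 u x h1).2)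
  have edge : underlyingEdge R = (· ⋖ ·) := by
    funext x y
    apply propext
    constructor
    · rintro ⟨hne, hR⟩
      have hle : x ≤ y := by
        rw [le_def, hR]; exact (Set.insert_nonempty _ _).ne_empty
      refine ⟨lt_of_le_of_ne hle hne, fun c h1 h2 => ?_⟩
      have : c ∈ R x y := (mem_iff _ _ _).2 ⟨h1.le, h2.le⟩
      rw [hR] at this
      rcases this with rfl | h
      · exact h1.ne rfl
      · exact h2.ne h
    · intro h
      refine ⟨h.lt.ne, ?_⟩
      ext c
      rw [mem_iff]
      constructor
      · rintro ⟨h1, h2⟩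
        rcases h.eq_or_eq h1 h2 with h | h
        · exact Or.inl h
        · exact Or.inr h
      · rintro (rfl | h')
        · exact ⟨le_rfl, h.le⟩
        · rw [Set.mem_singleton_iff] at h'
          subst h'
          exact ⟨h.le, le_rfl⟩
  have root : ∃ w : V, ∀ v, w ≤ v := by
    obtain ⟨m, hm'⟩ := (Set.finite_univ (α := V)).exists_minimal Set.univ_nonempty
    have hm : ∀ {x : V}, x ≤ m → m ≤ x := fun {x} h => hm'.2 (Set.mem_univ x) h
    refine ⟨m, fun v => ?_⟩
    by_contra h
    have h2 : ¬ v ≤ m := fun hv => h (hm hv)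
    obtain ⟨w, hw1, hw2⟩ := axr m v (not_not.1 h) (not_not.1 h2)
    have hmw : m ≤ w := hm hw1
    exact h (hmw.trans hw2)
  obtain ⟨r, hr⟩ := root
  rw [edge]
  refine ⟨?_, ?_, ⟨r, fun v _ => ?_⟩, ?_⟩
  · intro u v p hp hvu
    have hu : u ∈ p := List.mem_of_mem_head? hp.2.2.1
    have := (aux_allPaths u v u).1 ⟨p, hp, hu⟩
    exact absurd hvu.lt this.2.not_gt
  · intro v x y hx hy
    have hy' : y ∈ R r v := (mem_iff _ _ _).2 ⟨hr y, hy.le⟩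
    have hx' : x ∈ R r v := (mem_iff _ _ _).2 ⟨hr x, hx.le⟩
    rw [← axp r v x hx', Set.mem_union, mem_iff, mem_iff] at hy'
    rcases hy' with ⟨-, h⟩ | ⟨h, -⟩
    · rcases hy.eq_or_eq h hx.le with h | h
      · exact h
      · exact absurd h hx.lt.ne
    · rcases hx.eq_or_eq h hy.le with h | h
      · exact h.symm
      · exact absurd h hy.lt.ne
  · obtain ⟨p, hp, -⟩ := (aux_allPaths r v r).2 ⟨le_rfl, hr v⟩
    exact ⟨p, hp⟩
  · intro u v
    ext x
    rw [mem_iff, aux_allPaths]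
end

section
/- Let R be a directed transit function on a nonempty finite set V and let G_R be its underlying digraph. If R(u,v) = ∅, then there is no directed path from u to v in G_R. -/
/-- For a directed transit function `R` on a nonempty finite set,
`R(u,v) = ∅` implies that there is no directed path from `u` to `v` in the underlying
digraph `G_R`. -/
theorem stmt_15 {V : Type*} [Fintype V] [Nonempty V]
    (R : V → V → Set V)
    -- (t0)
    (t0 : ∀ u v w, R u w ≠ ∅ → R w v ≠ ∅ → R u v ≠ ∅)
    -- (t1)
    (t1 : ∀ u v, R u v ≠ ∅ → u ∈ R u v ∧ v ∈ R u v)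
    -- (t3)
    (t3 : ∀ u, R u u = {u})
    (u v : V) (h : R u v = ∅) :
    ¬ ∃ p : List V, IsDiPath (underlyingEdge R) u v p := by
  rintro ⟨p, hc, -, hh, hl⟩
  have key : ∀ (p : List V) (u : V), List.IsChain (underlyingEdge R) p →
      p.head? = some u → p.getLast? = some v → R u v ≠ ∅ := by
    intro p
    induction p with
    | nil => intro u _ h1; simp at h1
    | cons a t ih =>
      intro u hc hh hl
      simp only [List.head?_cons, Option.some.injEq] at hh
      subst hh
      cases t with
      | nil =>
        simp only [List.getLast?_singleton, Option.some.injEq] at hl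
        subst hl
        rw [t3]
        exact Set.singleton_ne_empty _
      | cons b t =>
        rw [List.isChain_cons_cons] at hc
        refine t0 a v b ?_ (ih b hc.2 (by simp) (by simpa [List.getLast?_cons_cons] using hl))
        rw [hc.1.2]
        exact (Set.insert_nonempty _ _).ne_empty
  exact key p u hc hh hl h
end

section
/- Let R be a directed transit function on a nonempty finite set V satisfying axiom (tr2). If R satisfies (b3₁) and (b3₂), then R also satisfies (b4), (b1₁), and (b1₂). -/
/-- Let `R` be a directed transit function on a nonempty finite set
satisfying (tr2). If `R` satisfies (b3₁) and (b3₂), then it also satisfies (b4), (b1₁),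
and (b1₂). -/
theorem stmt_16 {V : Type*} [Fintype V] [Nonempty V]
    (R : V → V → Set V)
    -- (t0)
    (t0 : ∀ u v w, R u w ≠ ∅ → R w v ≠ ∅ → R u v ≠ ∅)
    -- (t1)
    (t1 : ∀ u v, R u v ≠ ∅ → u ∈ R u v ∧ v ∈ R u v)
    -- (t3)
    (t3 : ∀ u, R u u = {u})
    -- (tr2)
    (tr2 : ∀ u v w, u ≠ v → (R u w = ∅ ∨ R w v = ∅) → w ∉ R u v)
    -- (b3₁)
    (b31 : ∀ u v x y, x ∈ R u v → y ∈ R u x → x ∈ R y v)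
    -- (b3₂)
    (b32 : ∀ u v x y, x ∈ R u v → y ∈ R x v → x ∈ R u y) :
    -- (b4)
    (∀ u v x, x ∈ R u v → R u x ∩ R x v = {x}) ∧
    -- (b1₁)
    (∀ u v x, x ∈ R u v → x ≠ v → v ∉ R u x) ∧
    -- (b1₂)
    (∀ u v x, x ∈ R u v → x ≠ u → u ∉ R x v) := by
  have b12 : ∀ u v x, x ∈ R u v → x ≠ u → u ∉ R x v := by
    intro u v x hx hne hu
    have h := b32 u v x u hx hu
    rw [t3] at h
    exact hne h
  refine ⟨?_, ?_, b12⟩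
  · intro u v x hx
    ext y
    simp only [Set.mem_inter_iff, Set.mem_singleton_iff]
    constructor
    · rintro ⟨h1, h2⟩
      by_contra hne
      exact b12 x v y h2 hne (b31 u v x y hx h1)
    · rintro rfl
      by_cases huv : u = v
      · subst huv
        rw [t3] at hx
        have hy : y = u := hx
        subst hy
        simp [t3]
      · exact ⟨(t1 u y fun h => tr2 u v y huv (Or.inl h) hx).2,
          (t1 y v fun h => tr2 u v y huv (Or.inr h) hx).1⟩
  · intro u v x hx hne hv
    have h := b31 u v x v hx hv
    rw [t3] at h
    exact hne h
end

section
/- Let R be a weakly geometric directed transit function on a nonempty finite set V and let G_R be its underlying digraph. Then R(u,v) ≠ ∅ if and only if there exists a directed path from u to v in G_R all of whose vertices lie in R(u,v). If R additionally satisfies (b4), then for every w ∈ R(u,v) there exists such a path that passes through w. -/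
/-- Let `R` be a weakly geometric directed transit function on a nonempty
finite set `V`. Then `R(u,v) ≠ ∅` iff there is a directed path from `u` to `v` in `G_R`
contained in `R(u,v)`. If `R` moreover satisfies (b4), then for every `w ∈ R(u,v)` such
a path through `w` exists. -/
theorem stmt_17 {V : Type*} [Fintype V] [Nonempty V]
    (R : V → V → Set V)
    -- (t0)
    (t0 : ∀ u v w, R u w ≠ ∅ → R w v ≠ ∅ → R u v ≠ ∅)
    -- (t1)
    (t1 : ∀ u v, R u v ≠ ∅ → u ∈ R u v ∧ v ∈ R u v)
    -- (t3)
    (t3 : ∀ u, R u u = {u})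
    -- (tr2)
    (tr2 : ∀ u v w, u ≠ v → (R u w = ∅ ∨ R w v = ∅) → w ∉ R u v)
    -- (b2)
    (b2 : ∀ u v x, x ∈ R u v → R u x ⊆ R u v ∧ R x v ⊆ R u v)
    -- (b1₁)
    (b11 : ∀ u v x, x ∈ R u v → x ≠ v → v ∉ R u x)
    -- (b1₂)
    (b12 : ∀ u v x, x ∈ R u v → x ≠ u → u ∉ R x v) :
    (∀ u v : V, R u v ≠ ∅ ↔
        ∃ p : List V, IsDiPath (underlyingEdge R) u v p ∧ ∀ x ∈ p, x ∈ R u v) ∧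
    ((∀ u v x, x ∈ R u v → R u x ∩ R x v = {x}) →
      ∀ u v w, w ∈ R u v →
        ∃ p : List V, IsDiPath (underlyingEdge R) u v p ∧ (∀ x ∈ p, x ∈ R u v) ∧
          w ∈ p) := by
  classical
  have key : ∀ n : ℕ, ∀ u v : V, (R u v).ncard = n → R u v ≠ ∅ →
      ∃ p : List V, IsDiPath (underlyingEdge R) u v p ∧ ∀ x ∈ p, x ∈ R u v := by
    intro n
    induction n using Nat.strong_induction_on with
    | _ n ih =>
    intro u v hn hne
    by_cases huv : u = v
    · subst huv
      exact ⟨[u], ⟨List.isChain_singleton u, by simp, by simp, by simp⟩, by simp [t3]⟩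
    obtain ⟨hu, hv⟩ := t1 u v hne
    obtain ⟨x, ⟨hx, hxu⟩, hmin⟩ := Set.exists_min_image (R u v \ {u})
      (fun x => (R u x).ncard) (Set.toFinite _) ⟨v, hv, fun h => huv h.symm⟩
    have hxu' : x ≠ u := hxu
    have hux : R u x ≠ ∅ := fun h => tr2 u v x huv (Or.inl h) hx
    have hxv : R x v ≠ ∅ := fun h => tr2 u v x huv (Or.inr h) hx
    have hedge : underlyingEdge R u x := by
      refine ⟨hxu'.symm, ?_⟩
      apply Set.Subset.antisymm
      · intro y hy
        by_contra hc
        have hyu : y ≠ u := fun h => hc (by simp [h])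
        have hyx : y ≠ x := fun h => hc (by simp [h])
        have h1 := hmin y ⟨(b2 u v x hx).1 hy, hyu⟩
        have h2 : (R u y).ncard < (R u x).ncard := by
          apply Set.ncard_lt_ncard _ (Set.toFinite _)
          exact ⟨(b2 u x y hy).1, fun h => b11 u x y hy hyx (h (t1 u x hux).2)⟩
        omega
      · rintro y (rfl | rfl)
        · exact (t1 _ _ hux).1
        · exact (t1 _ _ hux).2
    have hsub := (b2 u v x hx).2
    have hun := b12 u v x hx hxu'
    have hlt : (R x v).ncard < n := by
      rw [← hn]
      apply Set.ncard_lt_ncard _ (Set.toFinite _)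
      exact ⟨hsub, fun h => hun (h hu)⟩
    obtain ⟨p, ⟨hc, hnd, hh, hl⟩, hp⟩ := ih _ hlt x v rfl hxv
    cases p with
    | nil => simp at hh
    | cons a p =>
      simp only [List.head?_cons, Option.some.injEq] at hh
      subst hh
      refine ⟨u :: a :: p, ⟨?_, ?_, ?_, ?_⟩, ?_⟩
      · exact List.isChain_cons_cons.2 ⟨hedge, hc⟩
      · exact List.nodup_cons.2 ⟨fun h => hun (hp _ h), hnd⟩
      · simp
      · rw [List.getLast?_cons_cons]; exact hl
      · intro y hy
        rcases List.mem_cons.1 hy with rfl | hy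
        · exact hu
        · exact hsub (hp _ hy)
  refine ⟨fun u v => ⟨key _ u v rfl, ?_⟩, ?_⟩
  · rintro ⟨p, ⟨_, _, hh, _⟩, hp⟩ h
    have := hp u (List.mem_of_mem_head? hh)
    rw [h] at this
    exact this
  · intro b4 u v w hw
    have huw : R u w ≠ ∅ ∧ R w v ≠ ∅ := by
      by_cases huv : u = v
      · subst huv
        rw [t3] at hw
        have : w = u := hw
        subst this
        simp [t3]
      · exact ⟨fun h => tr2 u v w huv (Or.inl h) hw, fun h => tr2 u v w huv (Or.inr h) hw⟩
    obtain ⟨p, ⟨hc, hnd, hh, hl⟩, hp⟩ := key _ u w rfl huw.1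
    obtain ⟨q, ⟨hc2, hnd2, hh2, hl2⟩, hp2⟩ := key _ w v rfl huw.2
    have hwp : w ∈ p := List.mem_of_mem_getLast? hl
    cases q with
    | nil => simp at hh2
    | cons a q =>
      simp only [List.head?_cons, Option.some.injEq] at hh2
      subst hh2
      have hs := b2 u v a hw
      rw [List.nodup_cons] at hnd2
      refine ⟨p ++ q, ⟨?_, ?_, ?_, ?_⟩, ?_, ?_⟩
      · refine List.isChain_append.2 ⟨hc, (List.isChain_cons.1 hc2).2, ?_⟩
        intro x hx y hy
        rw [hl] at hx
        cases hx
        exact (List.isChain_cons.1 hc2).1 y hy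
      · refine List.nodup_append.2 ⟨hnd, hnd2.2, ?_⟩
        rintro x hx y hy rfl
        have h : x ∈ R u a ∩ R a v := ⟨hp _ hx, hp2 _ (List.mem_cons_of_mem _ hy)⟩
        rw [b4 u v a hw] at h
        have h' : x = a := h
        exact hnd2.1 (h' ▸ hy)
      · simp [List.head?_append, hh]
      · rw [List.getLast?_append, hl]
        rw [List.getLast?_cons] at hl2
        cases hq : q.getLast? <;> simp_all
      · intro x hx
        rcases List.mem_append.1 hx with h | h
        · exact hs.1 (hp _ h)
        · exact hs.2 (hp2 _ (List.mem_cons_of_mem _ h))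
      · exact List.mem_append_left _ hwp
end

section
/- Let G be a finite digraph on a nonempty vertex set V and let A_G be its all-paths transit function. Then A_G is a directed transit function (it satisfies (t0), (t1), (t3)) and additionally satisfies: (tr2) for all u ≠ v, A_G(u,w) = ∅ or A_G(w,v) = ∅ implies w ∉ A_G(u,v); (b5) A_G(u,w) ∩ A_G(w,v) = {w} implies A_G(u,w) ∪ A_G(w,v) ⊆ A_G(u,v); and (Mod) A_G(u,w) ≠ ∅ and A_G(w,v) ≠ ∅ imply A_G(u,v) ∩ A_G(u,w) ∩ A_G(w,v) ≠ ∅. -/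
theorem dp_pre {V : Type*} {E : V → V → Prop} {u v x : V} {a b : List V}
    (h : IsDiPath E u v (a ++ x :: b)) : IsDiPath E u x (a ++ [x]) := by
  obtain ⟨h1, h2, h3, h4⟩ := h
  have e : a ++ x :: b = (a ++ [x]) ++ b := by simp
  refine ⟨?_, ?_, ?_, by simp⟩
  · rw [e] at h1
    exact List.IsChain.left_of_append h1
  · rw [e] at h2
    exact List.Nodup.of_append_left h2
  · cases a <;> simpa using h3

theorem dp_suf {V : Type*} {E : V → V → Prop} {u v x : V} {a b : List V}
    (h : IsDiPath E u v (a ++ x :: b)) : IsDiPath E x v (x :: b) := by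
  obtain ⟨h1, h2, h3, h4⟩ := h
  refine ⟨List.IsChain.right_of_append h1, List.Nodup.of_append_right h2, by simp, ?_⟩
  simpa using h4

theorem dp_join {V : Type*} {E : V → V → Prop} {u v x : V} {a b : List V}
    (h : IsDiPath E u x (a ++ [x])) (h' : IsDiPath E x v (x :: b))
    (hd : ∀ y ∈ a, y ∉ b) : IsDiPath E u v (a ++ x :: b) := by
  obtain ⟨h1, h2, h3, h4⟩ := h
  obtain ⟨k1, k2, k3, k4⟩ := h'
  refine ⟨List.isChain_split.2 ⟨h1, k1⟩, ?_, ?_, by simpa using k4⟩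
  · simp only [List.nodup_append, List.nodup_cons, List.mem_cons] at *
    grind
  · cases a <;> simpa using h3

theorem first_hit {V : Type*} (q : List V) : ∀ p : List V, (∃ y ∈ p, y ∈ q) →
    ∃ a x b, p = a ++ x :: b ∧ x ∈ q ∧ ∀ y ∈ a, y ∉ q := by
  intro p
  induction p with
  | nil => simp
  | cons c t ih =>
    intro h
    by_cases hc : c ∈ q
    · exact ⟨[], c, t, rfl, hc, by simp⟩
    · obtain ⟨a, x, b, rfl, hx, ha⟩ := ih (by grind)
      exact ⟨c :: a, x, b, rfl, hx, by grind⟩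

theorem dp_ends {V : Type*} {E : V → V → Prop} {u v : V} {p : List V}
    (h : IsDiPath E u v p) : u ∈ p ∧ v ∈ p :=
  ⟨List.mem_of_mem_head? h.2.2.1, List.mem_of_mem_getLast? h.2.2.2⟩

theorem dp_key {V : Type*} {E : V → V → Prop} {u v w : V} {p q : List V}
    (hp : IsDiPath E u w p) (hq : IsDiPath E w v q) :
    ∃ a x b c d, p = a ++ x :: b ∧ q = c ++ x :: d ∧ IsDiPath E u v (a ++ x :: d) := by
  obtain ⟨a, x, b, rfl, hx, ha⟩ := first_hit q p ⟨w, (dp_ends hp).2, (dp_ends hq).1⟩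
  obtain ⟨c, d, rfl⟩ := List.append_of_mem hx
  exact ⟨a, x, b, c, d, rfl, rfl, dp_join (dp_pre hp) (dp_suf hq) (by grind)⟩

theorem dp_self {V : Type*} {E : V → V → Prop} {u : V} {p : List V}
    (h : IsDiPath E u u p) : p = [u] := by
  obtain ⟨h1, h2, h3, h4⟩ := h
  cases p with
  | nil => simp at h3
  | cons c t =>
    simp at h3
    subst h3
    cases t with
    | nil => rfl
    | cons d t =>
      rw [List.getLast?_cons_cons] at h4
      have := List.mem_of_mem_getLast? h4
      simp only [List.nodup_cons] at h2
      exact absurd this h2.1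

theorem ap_ne {V : Type*} {E : V → V → Prop} {u v : V} :
    allPaths E u v ≠ ∅ ↔ ∃ p, IsDiPath E u v p := by
  rw [← Set.nonempty_iff_ne_empty]
  constructor
  · rintro ⟨x, p, hp, -⟩
    exact ⟨p, hp⟩
  · rintro ⟨p, hp⟩
    exact ⟨u, p, hp, (dp_ends hp).1⟩

/-- For any finite digraph `G` on a nonempty vertex set, the all-paths
transit function `A_G` is a directed transit function ((t0), (t1), (t3)) and moreover
satisfies (tr2), (b5), and (Mod). -/
theorem stmt_18 {V : Type*} [Fintype V] [Nonempty V]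
    (E : V → V → Prop)
    (h_irrefl : ∀ x, ¬ E x x) :
    -- (t0)
    (∀ u v w, allPaths E u w ≠ ∅ → allPaths E w v ≠ ∅ → allPaths E u v ≠ ∅) ∧
    -- (t1)
    (∀ u v, allPaths E u v ≠ ∅ → u ∈ allPaths E u v ∧ v ∈ allPaths E u v) ∧
    -- (t3)
    (∀ u, allPaths E u u = {u}) ∧
    -- (tr2)
    (∀ u v w, u ≠ v → (allPaths E u w = ∅ ∨ allPaths E w v = ∅) →
        w ∉ allPaths E u v) ∧
    -- (b5)
    (∀ u v w, allPaths E u w ∩ allPaths E w v = {w} →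
        allPaths E u w ∪ allPaths E w v ⊆ allPaths E u v) ∧
    -- (Mod)
    (∀ u v w, allPaths E u w ≠ ∅ → allPaths E w v ≠ ∅ →
        allPaths E u v ∩ allPaths E u w ∩ allPaths E w v ≠ ∅) := by
  refine ⟨?_, ?_, ?_, ?_, ?_, ?_⟩
  · intro u v w h h'
    rw [ap_ne] at *
    obtain ⟨p, hp⟩ := h
    obtain ⟨q, hq⟩ := h'
    obtain ⟨a, x, b, c, d, -, -, hr⟩ := dp_key hp hq
    exact ⟨_, hr⟩
  · intro u v h
    obtain ⟨p, hp⟩ := ap_ne.1 h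
    exact ⟨⟨p, hp, (dp_ends hp).1⟩, ⟨p, hp, (dp_ends hp).2⟩⟩
  · intro u
    ext x
    constructor
    · rintro ⟨p, hp, hx⟩
      rw [dp_self hp] at hx
      simpa using hx
    · rintro rfl
      exact ⟨[x], ⟨List.isChain_singleton x, by simp, by simp, by simp⟩, by simp⟩
  · rintro u v w - h ⟨p, hp, hw⟩
    obtain ⟨a, b, rfl⟩ := List.append_of_mem hw
    rcases h with h | h
    · exact ap_ne.2 ⟨_, dp_pre hp⟩ h
    · exact ap_ne.2 ⟨_, dp_suf hp⟩ h
  · intro u v w h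
    have key : ∀ p q, IsDiPath E u w p → IsDiPath E w v q →
        ∃ r, IsDiPath E u v r ∧ (∀ y ∈ p, y ∈ r) ∧ ∀ y ∈ q, y ∈ r := by
      intro p q hp hq
      obtain ⟨a, x, b, c, d, rfl, rfl, hr⟩ := dp_key hp hq
      have hx : x ∈ allPaths E u w ∩ allPaths E w v :=
        ⟨⟨_, hp, by simp⟩, ⟨_, hq, by simp⟩⟩
      rw [h] at hx
      obtain rfl : x = w := hx
      have h1 := dp_self (dp_suf hp)
      have h2 := dp_self (dp_pre hq)
      simp at h1 h2
      subst h1 h2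
      exact ⟨_, hr, by grind, by grind⟩
    have hw : w ∈ allPaths E u w ∩ allPaths E w v := by rw [h]; rfl
    obtain ⟨⟨p0, hp0, -⟩, ⟨q0, hq0, -⟩⟩ := hw
    rintro y (⟨p, hp, hy⟩ | ⟨q, hq, hy⟩)
    · obtain ⟨r, hr, h1, h2⟩ := key p q0 hp hq0
      exact ⟨r, hr, h1 y hy⟩
    · obtain ⟨r, hr, h1, h2⟩ := key p0 q hp0 hq
      exact ⟨r, hr, h2 y hy⟩
  · intro u v w h h'
    obtain ⟨p, hp⟩ := ap_ne.1 h
    obtain ⟨q, hq⟩ := ap_ne.1 h'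
    obtain ⟨a, x, b, c, d, rfl, rfl, hr⟩ := dp_key hp hq
    exact Set.nonempty_iff_ne_empty.1
      ⟨x, ⟨⟨_, hr, by simp⟩, ⟨_, hp, by simp⟩⟩, ⟨_, hq, by simp⟩⟩
end

section
/- Let (V,d) be a finite quasimetric space and let I_d be its interval function, defined by I_d(u,v) = {w ∈ V : d(u,w) + d(w,v) = d(u,v)} if d(u,v) < ∞ and I_d(u,v) = ∅ if d(u,v) = ∞. Then I_d is a geometric directed transit function: it satisfies (t0), (t1), (t3), (tr2), (b2₁), (b2₂), (b3₁), and (b3₂). -/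
open ENNReal

/-- The interval function `I_d` of a finite quasimetric space `(V,d)` is a
geometric directed transit function: it satisfies (t0), (t1), (t3), (tr2), (b2₁), (b2₂),
(b3₁), and (b3₂). -/
theorem stmt_19 {V : Type*} [Fintype V] [Nonempty V]
    (d : V → V → ℝ≥0∞)
    (h_eq : ∀ x y, d x y = 0 ↔ x = y)
    (h_triangle : ∀ x y z, d x y ≤ d x z + d z y)
    (I : V → V → Set V)
    (hI_fin : ∀ u v, d u v ≠ ⊤ → I u v = {w : V | d u w + d w v = d u v})
    (hI_inf : ∀ u v, d u v = ⊤ → I u v = ∅) :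
    -- (t0)
    (∀ u v w, I u w ≠ ∅ → I w v ≠ ∅ → I u v ≠ ∅) ∧
    -- (t1)
    (∀ u v, I u v ≠ ∅ → u ∈ I u v ∧ v ∈ I u v) ∧
    -- (t3)
    (∀ u, I u u = {u}) ∧
    -- (tr2)
    (∀ u v w, u ≠ v → (I u w = ∅ ∨ I w v = ∅) → w ∉ I u v) ∧
    -- (b2₁)
    (∀ u v x, x ∈ I u v → I u x ⊆ I u v) ∧
    -- (b2₂)
    (∀ u v x, x ∈ I u v → I x v ⊆ I u v) ∧
    -- (b3₁)
    (∀ u v x y, x ∈ I u v → y ∈ I u x → x ∈ I y v) ∧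
    -- (b3₂)
    (∀ u v x y, x ∈ I u v → y ∈ I x v → x ∈ I u y) := by
  have mem : ∀ u v w, w ∈ I u v ↔ d u v ≠ ⊤ ∧ d u w + d w v = d u v := by
    intro u v w
    by_cases h : d u v = ⊤
    · simp [hI_inf u v h, h]
    · simp [hI_fin u v h, h]
  have hself : ∀ u, d u u = 0 := fun u => (h_eq u u).2 rfl
  have ne : ∀ u v, I u v ≠ ∅ ↔ d u v ≠ ⊤ := by
    intro u v
    constructor
    · intro h h'
      exact h (hI_inf u v h')
    · intro h
      have : u ∈ I u v := (mem u v u).2 ⟨h, by simp [hself]⟩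
      exact Set.nonempty_iff_ne_empty.1 ⟨u, this⟩
  have fin : ∀ u v w, w ∈ I u v → d u w ≠ ⊤ ∧ d w v ≠ ⊤ := by
    intro u v w h
    obtain ⟨h1, h2⟩ := (mem u v w).1 h
    rw [← h2] at h1
    exact ENNReal.add_ne_top.1 h1
  refine ⟨?_, ?_, ?_, ?_, ?_, ?_, ?_, ?_⟩
  · intro u v w h1 h2
    rw [ne] at *
    exact ne_top_of_le_ne_top (ENNReal.add_ne_top.2 ⟨h1, h2⟩) (h_triangle u v w)
  · intro u v h
    rw [ne] at h
    exact ⟨(mem _ _ _).2 ⟨h, by simp [hself]⟩, (mem _ _ _).2 ⟨h, by simp [hself]⟩⟩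
  · intro u
    ext w
    rw [mem, hself, Set.mem_singleton_iff]
    constructor
    · rintro ⟨_, h⟩
      exact ((h_eq u w).1 (add_eq_zero.1 h).1).symm
    · rintro rfl
      simp [hself]
  · intro u v w _ h hw
    obtain ⟨h1, h2⟩ := fin u v w hw
    rcases h with h | h
    · exact (ne _ _).2 h1 h
    · exact (ne _ _).2 h2 h
  · intro u v x hx y hy
    obtain ⟨h1, h2⟩ := (mem _ _ _).1 hx
    obtain ⟨h3, h4⟩ := (mem _ _ _).1 hy
    refine (mem _ _ _).2 ⟨h1, le_antisymm ?_ (h_triangle _ _ _)⟩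
    rw [← h2, ← h4, add_assoc]
    gcongr
    exact h_triangle _ _ _
  · intro u v x hx y hy
    obtain ⟨h1, h2⟩ := (mem _ _ _).1 hx
    obtain ⟨h3, h4⟩ := (mem _ _ _).1 hy
    refine (mem _ _ _).2 ⟨h1, le_antisymm ?_ (h_triangle _ _ _)⟩
    rw [← h2, ← h4, ← add_assoc]
    gcongr
    exact h_triangle _ _ _
  · intro u v x y hx hy
    obtain ⟨h1, h2⟩ := (mem _ _ _).1 hx
    obtain ⟨h3, h4⟩ := (mem _ _ _).1 hy
    have f1 := fin _ _ _ hx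
    have f2 := fin _ _ _ hy
    refine (mem _ _ _).2 ⟨?_, le_antisymm ?_ (h_triangle _ _ _)⟩
    · exact ne_top_of_le_ne_top (ENNReal.add_ne_top.2 ⟨f2.2, f1.2⟩) (h_triangle y v x)
    · refine (ENNReal.add_le_add_iff_left f2.1).1 ?_
      rw [← add_assoc, h4, h2]
      exact h_triangle _ _ _
  · intro u v x y hx hy
    obtain ⟨h1, h2⟩ := (mem _ _ _).1 hx
    obtain ⟨h3, h4⟩ := (mem _ _ _).1 hy
    have f1 := fin _ _ _ hx
    have f2 := fin _ _ _ hy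
    refine (mem _ _ _).2 ⟨?_, le_antisymm ?_ (h_triangle _ _ _)⟩
    · exact ne_top_of_le_ne_top (ENNReal.add_ne_top.2 ⟨f1.1, f2.1⟩) (h_triangle u y x)
    · refine (ENNReal.add_le_add_iff_right f2.2).1 ?_
      rw [add_assoc, h4, h2]
      exact h_triangle _ _ _
end
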